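/- Let α < 0 < β, 0 < ε < 8/(β−α), and let k₁, k₂ ∈ ℤ with k₂ ≥ k₁ + 2, and p, q ∈ ℝ with ε(k₁ − 1/4) < p < ε(k₁ + 1/4) and ε(k₂ − 1/4) < q < ε(k₂ + 1/4) (so both endpoints lie in the open α-phase of g_ε). Set ℓ := q − p, σ₁ := ε(k₁ + 1/4) − p ∈ (0, ε/2), σ₂ := q − ε(k₂ − 1/4) ∈ (0, ε/2), and ℓ̃ := ε(k₂ − k₁ − 3/2), and assume (β−α)(ℓ̃ + ε/2 + 2(σ₁ + σ₂)) > 4. Set m := ε(β−α)/((β−α)(ℓ̃ + ε/2) + 4), h := (ε/2)·((β−α)(ℓ̃ + ε/2) − 4)/((β−α)(ℓ̃ + ε/2) + 4), and v := 2/ℓ + (α+β)/2 + ((β−α)/(2ℓ))(ε/2 − σ₁ − σ₂). Then there exists a Lipschitz function n : [p,q] → [−1,1] with n(p) = −1, n(q) = 1 and n'(x) = v − g(x/ε) for almost every x ∈ [p,q] if and only if m σ₂ + h ≤ σ₁ ≤ (1/m) σ₂ − h/m. -/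

import Mathlib

open MeasureTheory Set

/-- The 1-periodic forcing term: `α` within distance `1/4` of the integers, `β` otherwise. -/
noncomputable def g (α β x : ℝ) : ℝ := if |x - (round x : ℝ)| ≤ 1/4 then α else β

/-- The edge `[p,q]` with endpoint values `a`, `b` is calibrated with velocity `v` by the
Lipschitz field `n : [p,q] → [-1,1]` satisfying `n' = v - g(·/ε)` a.e. on `[p,q]`. -/
def Calibrates (α β ε p q a b v : ℝ) (n : ℝ → ℝ) : Prop :=
  (∃ K : NNReal, LipschitzOnWith K n (Icc p q)) ∧
  (∀ x ∈ Icc p q, n x ∈ Icc (-1 : ℝ) 1) ∧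
  n p = a ∧ n q = b ∧
  ∀ᵐ x ∂(volume.restrict (Icc p q)), HasDerivAt n (v - g α β (x / ε)) x

/-!
A calibrating field is determined by its value at `p`: it is a translate of the primitive of
`v - g(·/ε)`, which is an affine function of slope `v - (α + β)/2` plus an `ε`-periodic zigzag. The
given `v` makes it climb by exactly `2` over the edge, so only the bounds `-1` and `1` are at stake.
The critical point for the lower bound is the end of the first `β`-phase. If the primitive is not
below its initial value there, then the slope `v - (α + β)/2` is nonnegative, because the zigzag is
minimal at that point, and for the same two reasons no later value is smaller; up to that point the
primitive consists of two affine pieces. As the zigzag is odd, the upper bound is the same statement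
for the edge reflected to `[-q, -p]`. Each of the two one-point conditions is then one of the two
linear inequalities between `σ₁` and `σ₂`.
-/

section Zigzag

variable {ε x : ℝ} {k : ℤ}

/-- The `k`-th `α`-phase of `g(·/ε)`, endpoints included. -/
abbrev alphaPhase (ε : ℝ) (k : ℤ) : Set ℝ := Icc (ε * (k - 1 / 4)) (ε * (k + 1 / 4))

/-- The closure of the `β`-phase of `g(·/ε)` that follows `alphaPhase ε k`. -/
abbrev betaPhase (ε : ℝ) (k : ℤ) : Set ℝ := Icc (ε * (k + 1 / 4)) (ε * (k + 3 / 4))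

lemma neg_mem_alphaPhase (hx : x ∈ alphaPhase ε k) : -x ∈ alphaPhase ε (-k) := by
  obtain ⟨hl, hu⟩ := hx
  constructor <;> push_cast <;> linarith

lemma neg_mem_betaPhase (hx : x ∈ betaPhase ε k) : -x ∈ betaPhase ε (-k - 1) := by
  obtain ⟨hl, hu⟩ := hx
  constructor <;> push_cast <;> linarith

lemma norm_coe_addCircle_eq_abs_sub (hε : 0 < ε) (h : |x - ε * k| ≤ ε / 2) :
    ‖(x : AddCircle ε)‖ = |x - ε * k| := by
  have hcoe : (x : AddCircle ε) = ((x - ε * k : ℝ) : AddCircle ε) := by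
    rw [eq_comm, ← sub_eq_zero, ← AddCircle.coe_sub, AddCircle.coe_eq_zero_iff]
    exact ⟨-k, by simp [mul_comm]⟩
  rw [hcoe]
  exact (AddCircle.norm_coe_eq_abs_iff ε hε.ne').2 (by rwa [abs_of_pos hε])

/-- The odd `ε`-periodic triangular wave with slope `1` on the `α`-phases of `g(·/ε)` and slope `-1`
on the `β`-phases: `ε/4` minus the distance to `ε/4 + εℤ`, the distance being written as a norm in
the circle of length `ε`. -/
noncomputable def zigzag (ε x : ℝ) : ℝ := ε / 4 - ‖((x - ε / 4 : ℝ) : AddCircle ε)‖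

lemma zigzag_of_mem_alphaPhase (hε : 0 < ε) (hx : x ∈ alphaPhase ε k) :
    zigzag ε x = x - ε * k := by
  obtain ⟨hl, hu⟩ := hx
  have habs : |x - ε / 4 - ε * k| = ε / 4 - (x - ε * k) := by
    rw [abs_of_nonpos (by linarith)]; ring
  rw [zigzag, norm_coe_addCircle_eq_abs_sub (k := k) hε (by rw [habs]; linarith), habs,
    sub_sub_cancel]

lemma zigzag_of_mem_betaPhase (hε : 0 < ε) (hx : x ∈ betaPhase ε k) :
    zigzag ε x = ε / 2 - (x - ε * k) := by
  obtain ⟨hl, hu⟩ := hx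
  have habs : |x - ε / 4 - ε * k| = x - ε / 4 - ε * k := abs_of_nonneg (by linarith)
  rw [zigzag, norm_coe_addCircle_eq_abs_sub (k := k) hε (by rw [habs]; linarith), habs]
  ring

lemma neg_div_four_le_zigzag (hε : 0 < ε) (x : ℝ) : -(ε / 4) ≤ zigzag ε x := by
  have := AddCircle.norm_le_half_period ε hε.ne' (x := ((x - ε / 4 : ℝ) : AddCircle ε))
  rw [abs_of_pos hε] at this
  unfold zigzag
  linarith

lemma lipschitzWith_zigzag (ε : ℝ) : LipschitzWith 1 (zigzag ε) := by
  refine LipschitzWith.of_dist_le_mul fun x y ↦ ?_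
  calc dist (zigzag ε x) (zigzag ε y)
      = |‖((y - ε / 4 : ℝ) : AddCircle ε)‖ - ‖((x - ε / 4 : ℝ) : AddCircle ε)‖| := by
        rw [Real.dist_eq, zigzag, zigzag, sub_sub_sub_cancel_left]
    _ ≤ ‖((y - x : ℝ) : AddCircle ε)‖ := by
        simpa only [← AddCircle.coe_sub, sub_sub_sub_cancel_right] using
          abs_norm_sub_norm_le ((y - ε / 4 : ℝ) : AddCircle ε) ((x - ε / 4 : ℝ) : AddCircle ε)
    _ ≤ |y - x| := QuotientAddGroup.norm_mk_le_norm
    _ = (1 : NNReal) * dist x y := by rw [NNReal.coe_one, one_mul, dist_comm, Real.dist_eq]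

lemma exists_mem_phase (hε : 0 < ε) (x : ℝ) :
    ∃ k, x ∈ alphaPhase ε k ∨ x ∈ betaPhase ε k := by
  have hl : (⌊x / ε + 1 / 4⌋ : ℝ) - 1 / 4 ≤ x / ε := by
    linarith [Int.floor_le (x / ε + 1 / 4)]
  have hu : x / ε ≤ (⌊x / ε + 1 / 4⌋ : ℝ) + 3 / 4 := by
    linarith [Int.lt_floor_add_one (x / ε + 1 / 4)]
  rw [le_div_iff₀' hε] at hl
  rw [div_le_iff₀' hε] at hu
  exact ⟨_, (le_total x _).imp (⟨hl, ·⟩) (⟨·, hu⟩)⟩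

lemma zigzag_neg (hε : 0 < ε) (x : ℝ) : zigzag ε (-x) = -zigzag ε x := by
  obtain ⟨k, hk | hk⟩ := exists_mem_phase hε x
  · rw [zigzag_of_mem_alphaPhase hε hk, zigzag_of_mem_alphaPhase hε (neg_mem_alphaPhase hk)]
    push_cast; ring
  · rw [zigzag_of_mem_betaPhase hε hk, zigzag_of_mem_betaPhase hε (neg_mem_betaPhase hk)]
    push_cast; ring

lemma hasDerivAt_zigzag_of_mem_Ioo_alpha (hε : 0 < ε)
    (hx : x ∈ Ioo (ε * (k - 1 / 4)) (ε * (k + 1 / 4))) :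
    HasDerivAt (zigzag ε) 1 x :=
  ((hasDerivAt_id x).sub_const (ε * k)).congr_of_eventuallyEq <| by
    filter_upwards [Ioo_mem_nhds hx.1 hx.2] with t ht
    exact zigzag_of_mem_alphaPhase hε (Ioo_subset_Icc_self ht)

lemma hasDerivAt_zigzag_of_mem_Ioo_beta (hε : 0 < ε)
    (hx : x ∈ Ioo (ε * (k + 1 / 4)) (ε * (k + 3 / 4))) :
    HasDerivAt (zigzag ε) (-1) x :=
  (((hasDerivAt_id x).sub_const (ε * k)).const_sub (ε / 2)).congr_of_eventuallyEq <| by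
    filter_upwards [Ioo_mem_nhds hx.1 hx.2] with t ht
    exact zigzag_of_mem_betaPhase hε (Ioo_subset_Icc_self ht)

end Zigzag

section Forcing

variable {α β ε x : ℝ} {k : ℤ}

lemma g_div_eq_ite_norm (hε : 0 < ε) (x : ℝ) :
    g α β (x / ε) = if ‖(x : AddCircle ε)‖ ≤ ε / 4 then α else β := by
  have hiff : ‖(x : AddCircle ε)‖ ≤ ε / 4 ↔ |x / ε - round (x / ε)| ≤ 1 / 4 := by
    rw [AddCircle.norm_eq' ε hε, ← div_eq_inv_mul, ← mul_one_div ε, mul_le_mul_iff_right₀ hε]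
  simp only [g, hiff]

lemma g_div_of_mem_alphaPhase (hε : 0 < ε) (hx : x ∈ alphaPhase ε k) :
    g α β (x / ε) = α := by
  have habs : |x - ε * k| ≤ ε / 4 := abs_le.2 ⟨by linarith [hx.1], by linarith [hx.2]⟩
  rw [g_div_eq_ite_norm hε, norm_coe_addCircle_eq_abs_sub (k := k) hε (by linarith), if_pos habs]

lemma g_div_of_mem_Ioo_beta (hε : 0 < ε) (hx : x ∈ Ioo (ε * (k + 1 / 4)) (ε * (k + 3 / 4))) :
    g α β (x / ε) = β := by
  obtain ⟨hl, hu⟩ := hx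
  rw [g_div_eq_ite_norm hε, if_neg (not_le.2 ?_)]
  rcases le_total x (ε * (k + 1 / 2)) with hx | hx
  · have habs : |x - ε * k| = x - ε * k := abs_of_nonneg (by linarith)
    rw [norm_coe_addCircle_eq_abs_sub (k := k) hε (by linarith), habs]
    linarith
  · have habs : |x - ε * (k + 1 : ℤ)| = ε * (k + 1 : ℤ) - x := by
      rw [abs_of_nonpos (by push_cast; linarith), neg_sub]
    rw [norm_coe_addCircle_eq_abs_sub (k := k + 1) hε (by push_cast at habs ⊢; linarith), habs]
    push_cast
    linarith

/-- The primitive of `v - g(·/ε)` vanishing at `0`, of which every calibrating field is a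
translate. -/
noncomputable def fieldPrimitive (α β ε v x : ℝ) : ℝ :=
  (v - (α + β) / 2) * x + (β - α) / 2 * zigzag ε x

lemma hasDerivAt_fieldPrimitive {s : ℝ} (hs : HasDerivAt (zigzag ε) s x) (α β v : ℝ) :
    HasDerivAt (fieldPrimitive α β ε v) (v - (α + β) / 2 + (β - α) / 2 * s) x := by
  have hlinear : HasDerivAt (fun t : ℝ ↦ (v - (α + β) / 2) * t) (v - (α + β) / 2) x := by
    simpa only [mul_one] using (hasDerivAt_id' x).const_mul (v - (α + β) / 2)
  exact hlinear.add (hs.const_mul ((β - α) / 2))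

lemma ae_hasDerivAt_fieldPrimitive (hε : 0 < ε) (α β v : ℝ) :
    ∀ᵐ x, HasDerivAt (fieldPrimitive α β ε v) (v - g α β (x / ε)) x := by
  have hcount : (range fun k : ℤ ↦ ε * (k - 1 / 4)).Countable := countable_range _
  have hcount' : (range fun k : ℤ ↦ ε * (k + 1 / 4)).Countable := countable_range _
  filter_upwards [hcount.ae_notMem volume, hcount'.ae_notMem volume] with x hx hx'
  obtain ⟨k, hk | hk⟩ := exists_mem_phase hε x
  · have hk' : x ∈ Ioo (ε * (k - 1 / 4)) (ε * (k + 1 / 4)) :=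
      ⟨hk.1.lt_of_ne fun h ↦ hx ⟨k, h⟩, hk.2.lt_of_ne fun h ↦ hx' ⟨k, h.symm⟩⟩
    have hzigzag := hasDerivAt_zigzag_of_mem_Ioo_alpha hε hk'
    refine (hasDerivAt_fieldPrimitive hzigzag α β v).congr_deriv ?_
    rw [g_div_of_mem_alphaPhase hε hk]
    ring
  · have hk' : x ∈ Ioo (ε * (k + 1 / 4)) (ε * (k + 3 / 4)) :=
      ⟨hk.1.lt_of_ne fun h ↦ hx' ⟨k, h⟩,
        hk.2.lt_of_ne fun h ↦ hx ⟨k + 1, by push_cast; linarith⟩⟩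
    have hzigzag := hasDerivAt_zigzag_of_mem_Ioo_beta hε hk'
    refine (hasDerivAt_fieldPrimitive hzigzag α β v).congr_deriv ?_
    rw [g_div_of_mem_Ioo_beta hε hk']
    ring

lemma exists_lipschitzWith_fieldPrimitive (α β ε v : ℝ) :
    ∃ K, LipschitzWith K (fieldPrimitive α β ε v) :=
  ⟨_, (lipschitzWith_smul (v - (α + β) / 2)).add
    ((lipschitzWith_smul ((β - α) / 2)).comp (lipschitzWith_zigzag ε))⟩

lemma fieldPrimitive_neg (hε : 0 < ε) (α β v x : ℝ) :
    fieldPrimitive α β ε v (-x) = -fieldPrimitive α β ε v x := by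
  rw [fieldPrimitive, fieldPrimitive, zigzag_neg hε]
  ring

lemma Calibrates.eqOn {p q a b v : ℝ} {n : ℝ → ℝ} (hn : Calibrates α β ε p q a b v n)
    (hε : 0 < ε) (hpq : p ≤ q) :
    EqOn n (fun x ↦ a + (fieldPrimitive α β ε v x - fieldPrimitive α β ε v p)) (Icc p q) := by
  obtain ⟨⟨K, hK⟩, -, hnp, -, hderiv⟩ := hn
  obtain ⟨K', hK'⟩ := exists_lipschitzWith_fieldPrimitive α β ε v
  rw [← uIcc_of_le hpq] at hK hderiv ⊢
  have hac := hK.absolutelyContinuousOnInterval.sub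
    (hK'.lipschitzOnWith (s := uIcc p q)).absolutelyContinuousOnInterval
  obtain ⟨C, hC⟩ := hac.const_of_ae_hasDerivAt_zero <| by
    filter_upwards [(ae_restrict_iff' measurableSet_uIcc).1 hderiv,
      ae_hasDerivAt_fieldPrimitive hε α β v] with x hnx hFx hx
    simpa only [sub_self] using (hnx hx).sub hFx
  intro x hx
  have hp := hC p left_mem_uIcc
  have hx := hC x hx
  simp only [Pi.sub_apply] at hp hx
  linarith

lemma exists_calibrates_iff {p q : ℝ} (hε : 0 < ε) (hpq : p ≤ q) (a b v : ℝ) :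
    (∃ n, Calibrates α β ε p q a b v n) ↔
      fieldPrimitive α β ε v q - fieldPrimitive α β ε v p = b - a ∧
      ∀ x ∈ Icc p q, a + (fieldPrimitive α β ε v x - fieldPrimitive α β ε v p) ∈ Icc (-1) 1 := by
  constructor
  · rintro ⟨n, hn⟩
    have heq := hn.eqOn hε hpq
    obtain ⟨-, hbound, -, hnq, -⟩ := hn
    exact ⟨eq_sub_of_add_eq' ((heq (right_mem_Icc.2 hpq)).symm.trans hnq),
      fun x hx ↦ mem_of_eq_of_mem (heq hx).symm (hbound x hx)⟩
  · rintro ⟨hq, hbound⟩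
    obtain ⟨K, hK⟩ := exists_lipschitzWith_fieldPrimitive α β ε v
    refine ⟨_, ⟨_, ((LipschitzWith.const a).add (hK.sub (.const _))).lipschitzOnWith⟩, hbound,
      by simp, by linarith, ae_restrict_of_ae ?_⟩
    filter_upwards [ae_hasDerivAt_fieldPrimitive hε α β v] with x hx
    exact (hx.sub_const _).const_add _

end Forcing

section Edge

variable {α β ε p q v x y : ℝ} {k k₁ k₂ : ℤ}

lemma fieldPrimitive_sub_of_mem_alphaPhase (hε : 0 < ε)
    (hx : x ∈ alphaPhase ε k) (hy : y ∈ alphaPhase ε k) :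
    fieldPrimitive α β ε v y - fieldPrimitive α β ε v x = (v - α) * (y - x) := by
  rw [fieldPrimitive, fieldPrimitive, zigzag_of_mem_alphaPhase hε hx,
    zigzag_of_mem_alphaPhase hε hy]
  ring

lemma fieldPrimitive_sub_of_mem_betaPhase (hε : 0 < ε)
    (hx : x ∈ betaPhase ε k) (hy : y ∈ betaPhase ε k) :
    fieldPrimitive α β ε v y - fieldPrimitive α β ε v x = (v - β) * (y - x) := by
  rw [fieldPrimitive, fieldPrimitive, zigzag_of_mem_betaPhase hε hx,
    zigzag_of_mem_betaPhase hε hy]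
  ring

lemma zigzag_end_betaPhase (hε : 0 < ε) (k : ℤ) : zigzag ε (ε * (k + 3 / 4)) = -(ε / 4) := by
  rw [zigzag_of_mem_betaPhase (k := k) hε ⟨by linarith, le_rfl⟩]
  ring

lemma fieldPrimitive_end_betaPhase_le (hαβ : α ≤ β) (hε : 0 < ε) (hv : (α + β) / 2 ≤ v)
    (hx : ε * (k + 3 / 4) ≤ x) :
    fieldPrimitive α β ε v (ε * (k + 3 / 4)) ≤ fieldPrimitive α β ε v x := by
  rw [fieldPrimitive, fieldPrimitive, zigzag_end_betaPhase hε]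
  exact add_le_add (mul_le_mul_of_nonneg_left hx (by linarith))
    (mul_le_mul_of_nonneg_left (neg_div_four_le_zigzag hε x) (by linarith))

lemma add_div_two_le_of_fieldPrimitive_le (hαβ : α ≤ β) (hε : 0 < ε) (hp : p < ε * (k + 3 / 4))
    (h : fieldPrimitive α β ε v p ≤ fieldPrimitive α β ε v (ε * (k + 3 / 4))) :
    (α + β) / 2 ≤ v := by
  rw [fieldPrimitive, fieldPrimitive, zigzag_end_betaPhase hε] at h
  have hdrop : (β - α) / 2 * -(ε / 4) ≤ (β - α) / 2 * zigzag ε p :=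
    mul_le_mul_of_nonneg_left (neg_div_four_le_zigzag hε p) (by linarith)
  have hrise : 0 ≤ (v - (α + β) / 2) * (ε * (k + 3 / 4) - p) := by linarith
  exact sub_nonneg.1 (nonneg_of_mul_nonneg_left hrise (sub_pos.2 hp))

lemma forall_mem_Icc_le_fieldPrimitive_iff (hαβ : α ≤ β) (hε : 0 < ε)
    (hp : p ∈ alphaPhase ε k) (hq : ε * (k + 3 / 4) ≤ q) :
    (∀ x ∈ Icc p q, fieldPrimitive α β ε v p ≤ fieldPrimitive α β ε v x) ↔
      fieldPrimitive α β ε v p ≤ fieldPrimitive α β ε v (ε * (k + 3 / 4)) := by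
  refine ⟨fun h ↦ h _ ⟨by linarith [hp.2], hq⟩, fun hend x hx ↦ ?_⟩
  have hv : (α + β) / 2 ≤ v :=
    add_div_two_le_of_fieldPrimitive_le hαβ hε (by linarith [hp.2]) hend
  have halpha {y : ℝ} (hpy : p ≤ y) (hy : y ≤ ε * (k + 1 / 4)) :
      fieldPrimitive α β ε v p ≤ fieldPrimitive α β ε v y := by
    rw [← sub_nonneg, fieldPrimitive_sub_of_mem_alphaPhase hε hp ⟨hp.1.trans hpy, hy⟩]
    exact mul_nonneg (by linarith) (sub_nonneg.2 hpy)
  rcases le_total x (ε * (k + 1 / 4)) with hx₁ | hx₁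
  · exact halpha hx.1 hx₁
  rcases le_total (ε * (k + 3 / 4)) x with hx₂ | hx₂
  · exact hend.trans (fieldPrimitive_end_betaPhase_le hαβ hε hv hx₂)
  rcases le_total β v with hβv | hvβ
  · refine (halpha hp.2 le_rfl).trans ?_
    rw [← sub_nonneg, fieldPrimitive_sub_of_mem_betaPhase hε ⟨le_rfl, by linarith⟩ ⟨hx₁, hx₂⟩]
    exact mul_nonneg (sub_nonneg.2 hβv) (sub_nonneg.2 hx₁)
  · refine hend.trans ?_
    rw [← sub_nonpos, fieldPrimitive_sub_of_mem_betaPhase hε ⟨hx₁, hx₂⟩ ⟨by linarith, le_rfl⟩]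
    exact mul_nonpos_of_nonpos_of_nonneg (sub_nonpos.2 hvβ) (sub_nonneg.2 hx₂)

lemma forall_mem_Icc_fieldPrimitive_le_iff (hαβ : α ≤ β) (hε : 0 < ε)
    (hp : p ≤ ε * (k - 3 / 4)) (hq : q ∈ alphaPhase ε k) :
    (∀ x ∈ Icc p q, fieldPrimitive α β ε v x ≤ fieldPrimitive α β ε v q) ↔
      fieldPrimitive α β ε v (ε * (k - 3 / 4)) ≤ fieldPrimitive α β ε v q := by
  have hreflect := forall_mem_Icc_le_fieldPrimitive_iff (α := α) (β := β) (v := v) (q := -p) hαβ hε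
    (neg_mem_alphaPhase hq) (by push_cast; linarith)
  have hend : ε * ((-k : ℤ) + 3 / 4) = -(ε * (k - 3 / 4)) := by push_cast; ring
  have hforall (P : ℝ → Prop) : (∀ x ∈ Icc (-q) (-p), P x) ↔ ∀ x ∈ Icc p q, P (-x) := by
    rw [← image_neg_Icc, forall_mem_image]
  simpa only [hforall, hend, fieldPrimitive_neg hε, neg_le_neg_iff] using hreflect

lemma fieldPrimitive_le_end_betaPhase_iff (hε : 0 < ε) (hp : p ∈ alphaPhase ε k) :
    fieldPrimitive α β ε v p ≤ fieldPrimitive α β ε v (ε * (k + 3 / 4)) ↔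
      0 ≤ (v - (α + β) / 2) * (ε * (k + 1 / 4) - p + ε / 2) +
        (β - α) / 2 * (ε * (k + 1 / 4) - p - ε / 2) := by
  rw [← sub_nonneg, fieldPrimitive, fieldPrimitive, zigzag_of_mem_alphaPhase hε hp,
    zigzag_end_betaPhase hε]
  ring_nf

lemma fieldPrimitive_start_betaPhase_le_iff (hε : 0 < ε) (hq : q ∈ alphaPhase ε k) :
    fieldPrimitive α β ε v (ε * (k - 3 / 4)) ≤ fieldPrimitive α β ε v q ↔
      0 ≤ (v - (α + β) / 2) * (q - ε * (k - 1 / 4) + ε / 2) +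
        (β - α) / 2 * (q - ε * (k - 1 / 4) - ε / 2) := by
  have hstart : ε * (k - 3 / 4) = -(ε * ((-k : ℤ) + 3 / 4)) := by push_cast; ring
  rw [← sub_nonneg, hstart, fieldPrimitive_neg hε, fieldPrimitive, fieldPrimitive,
    zigzag_of_mem_alphaPhase hε hq, zigzag_end_betaPhase hε]
  push_cast
  ring_nf

lemma fieldPrimitive_sub_eq (hε : 0 < ε) (hp : p ∈ alphaPhase ε k₁) (hq : q ∈ alphaPhase ε k₂) :
    fieldPrimitive α β ε v q - fieldPrimitive α β ε v p =
      (v - (α + β) / 2) * (q - p) -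
        (β - α) / 2 * (ε / 2 - (ε * (k₁ + 1 / 4) - p) - (q - ε * (k₂ - 1 / 4))) := by
  rw [fieldPrimitive, fieldPrimitive, zigzag_of_mem_alphaPhase hε hp,
    zigzag_of_mem_alphaPhase hε hq]
  ring

lemma exists_calibrates_neg_one_one_iff (hαβ : α ≤ β) (hε : 0 < ε) (hk : k₁ < k₂)
    (hp : p ∈ alphaPhase ε k₁) (hq : q ∈ alphaPhase ε k₂) :
    (∃ n, Calibrates α β ε p q (-1) 1 v n) ↔
      fieldPrimitive α β ε v q - fieldPrimitive α β ε v p = 2 ∧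
        0 ≤ (v - (α + β) / 2) * (ε * (k₁ + 1 / 4) - p + ε / 2) +
          (β - α) / 2 * (ε * (k₁ + 1 / 4) - p - ε / 2) ∧
        0 ≤ (v - (α + β) / 2) * (q - ε * (k₂ - 1 / 4) + ε / 2) +
          (β - α) / 2 * (q - ε * (k₂ - 1 / 4) - ε / 2) := by
  have hstep : ε * (k₁ + 1) ≤ ε * k₂ := by gcongr; exact_mod_cast hk
  have hlower : ε * (k₁ + 3 / 4) ≤ q := by linarith [hq.1]
  have hupper : p ≤ ε * (k₂ - 3 / 4) := by linarith [hp.2]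
  rw [← fieldPrimitive_le_end_betaPhase_iff hε hp, ← fieldPrimitive_start_betaPhase_le_iff hε hq,
    ← forall_mem_Icc_le_fieldPrimitive_iff hαβ hε hp hlower,
    ← forall_mem_Icc_fieldPrimitive_le_iff hαβ hε hupper hq, ← forall₂_and,
    exists_calibrates_iff hε (by linarith [hp.2]), show (1 : ℝ) - -1 = 2 by norm_num]
  refine and_congr_right fun hrise ↦ forall₂_congr fun x _ ↦ and_congr ?_ ?_
  · rw [le_add_iff_nonneg_right, sub_nonneg]
  · constructor <;> intro h <;> linarith

end Edge

lemma nonneg_iff_threshold_le {D L ε ℓ c s t : ℝ} (hDL : 0 < D * L + 4) (hℓ : 0 < ℓ)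
    (hsum : ℓ = L + ε / 2 + s + t) (hc : c * ℓ = 2 + D / 2 * (ε / 2 - s - t)) :
    0 ≤ c * (s + ε / 2) + D / 2 * (s - ε / 2) ↔
      ε * D / (D * L + 4) * t + ε / 2 * (D * L - 4) / (D * L + 4) ≤ s := by
  have hscaled : (c * (s + ε / 2) + D / 2 * (s - ε / 2)) * ℓ =
      ((D * L + 4) * s - (ε * D * t + ε / 2 * (D * L - 4))) / 2 := by
    linear_combination (s + ε / 2) * hc + D / 2 * (s - ε / 2) * hsum
  rw [← mul_nonneg_iff_of_pos_right hℓ, hscaled, div_mul_eq_mul_div _ _ t, ← add_div,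
    div_le_iff₀' hDL]
  constructor <;> intro h <;> linarith

theorem stmt10_general (α β ε p q : ℝ) (k₁ k₂ : ℤ) (hαβ : α < β) (hε : 0 < ε) (hk : k₁ < k₂)
    (hp : p ∈ alphaPhase ε k₁) (hq : q ∈ alphaPhase ε k₂)
    (σ₁ σ₂ ltil m h v : ℝ)
    (hσ₁ : σ₁ = ε * (k₁ + 1 / 4) - p) (hσ₂ : σ₂ = q - ε * (k₂ - 1 / 4))
    (hltil : ltil = ε * ((k₂ : ℝ) - k₁ - 3 / 2))
    (hm : m = ε * (β - α) / ((β - α) * (ltil + ε / 2) + 4))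
    (hh : h = ε / 2 * ((β - α) * (ltil + ε / 2) - 4) / ((β - α) * (ltil + ε / 2) + 4))
    (hv : v = 2 / (q - p) + (α + β) / 2 + (β - α) / (2 * (q - p)) * (ε / 2 - σ₁ - σ₂)) :
    (∃ n : ℝ → ℝ, Calibrates α β ε p q (-1) 1 v n) ↔
      (m * σ₂ + h ≤ σ₁ ∧ σ₁ ≤ (1 / m) * σ₂ - h / m) := by
  have hD : 0 < β - α := sub_pos.2 hαβ
  have hstep : ε * (k₁ + 1) ≤ ε * k₂ := by gcongr; exact_mod_cast hk
  have hL : 0 ≤ ltil + ε / 2 := by linarith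
  have hDL : 0 < (β - α) * (ltil + ε / 2) + 4 :=
    add_pos_of_nonneg_of_pos (mul_nonneg hD.le hL) four_pos
  have hℓ : 0 < q - p := by linarith [hp.2, hq.1]
  have hsum : q - p = ltil + ε / 2 + ε / 2 + σ₁ + σ₂ := by linarith
  have hslope : (v - (α + β) / 2) * (q - p) = 2 + (β - α) / 2 * (ε / 2 - σ₁ - σ₂) := by
    rw [hv]; field_simp; ring
  have hrise : fieldPrimitive α β ε v q - fieldPrimitive α β ε v p = 2 := by
    rw [fieldPrimitive_sub_eq hε hp hq, hslope, hσ₁, hσ₂, add_sub_cancel_right]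
  have hfirst := nonneg_iff_threshold_le hDL hℓ hsum hslope
  have hlast := nonneg_iff_threshold_le (s := σ₂) (t := σ₁) hDL hℓ
    (by rw [hsum, add_right_comm]) (by rw [hslope, sub_right_comm])
  have hm_pos : 0 < m := hm ▸ div_pos (mul_pos hε hD) hDL
  have hupper : σ₁ ≤ 1 / m * σ₂ - h / m ↔ m * σ₁ + h ≤ σ₂ := by
    rw [one_div_mul_eq_div, ← sub_div, le_div_iff₀' hm_pos, le_sub_iff_add_le]
  rw [exists_calibrates_neg_one_one_iff hαβ.le hε hk hp hq, and_iff_right hrise, ← hσ₁, ← hσ₂,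
    hfirst, hlast, ← hm, ← hh, hupper]

theorem stmt10 (α β ε p q : ℝ) (k₁ k₂ : ℤ) (hα : α < 0) (hβ : 0 < β)
    (hε0 : 0 < ε) (hε : ε < 8 / (β - α)) (hk : k₁ + 2 ≤ k₂)
    (hp1 : ε * (k₁ - 1/4) < p) (hp2 : p < ε * (k₁ + 1/4))
    (hq1 : ε * (k₂ - 1/4) < q) (hq2 : q < ε * (k₂ + 1/4))
    (σ₁ σ₂ ltil m h v : ℝ)
    (hσ₁ : σ₁ = ε * (k₁ + 1/4) - p) (hσ₂ : σ₂ = q - ε * (k₂ - 1/4))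
    (hltil : ltil = ε * ((k₂ : ℝ) - k₁ - 3/2))
    (hcond : 4 < (β - α) * (ltil + ε / 2 + 2 * (σ₁ + σ₂)))
    (hm : m = ε * (β - α) / ((β - α) * (ltil + ε / 2) + 4))
    (hh : h = ε / 2 * ((β - α) * (ltil + ε / 2) - 4) / ((β - α) * (ltil + ε / 2) + 4))
    (hv : v = 2 / (q - p) + (α + β) / 2 + (β - α) / (2 * (q - p)) * (ε / 2 - σ₁ - σ₂)) :
    (∃ n : ℝ → ℝ, Calibrates α β ε p q (-1) 1 v n) ↔
      (m * σ₂ + h ≤ σ₁ ∧ σ₁ ≤ (1 / m) * σ₂ - h / m) :=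
  stmt10_general α β ε p q k₁ k₂ (hα.trans hβ) hε0 (by omega) ⟨hp1.le, hp2.le⟩ ⟨hq1.le, hq2.le⟩
    σ₁ σ₂ ltil m h v hσ₁ hσ₂ hltil hm hh hv
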